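/- Suppose C is a contribution profile with C_i > 0 for all i ∈ N and every agent has at least one acceptable project, and suppose the Nash product has a unique maximizer δ* over Δ(|C|). Let δ⁰ ∈ Δ(|C|) satisfy δ⁰(x) > 0 for all x ∈ A, and define the sequence (δ^k) by δ^{k+1}(x) = Σ_{i∈N} C_i · (u_i(x)/u_i(δ^k)) · δ^k(x) for all x ∈ A. Then δ^k converges to δ* as k → ∞ (i.e., δ^k(x) → δ*(x) for every x ∈ A). -/

import Mathlib

open Finset

/-- A distribution of value `V`: nonnegative and sums to `V`. -/
def IsDistribution {A : Type*} [Fintype A] (δ : A → ℝ) (V : ℝ) : Prop :=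
  (∀ x, 0 ≤ δ x) ∧ ∑ x, δ x = V

/-- Agent's (linear) utility of a distribution. -/
def util {A : Type*} [Fintype A] (u : A → ℝ) (δ : A → ℝ) : ℝ :=
  ∑ x, δ x * u x

/-- The Nash product of a distribution (real exponentiation, `0 ^ 0 = 1`). -/
noncomputable def nashProduct {A N : Type*} [Fintype A] [Fintype N]
    (u : N → A → ℝ) (C : N → ℝ) (δ : A → ℝ) : ℝ :=
  ∏ i, (util (u i) δ) ^ (C i)

/-- A Nash distribution for contribution profile `C`: a maximizer of the Nash
product over `Δ(|C|)`. -/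
def IsNashDistribution {A N : Type*} [Fintype A] [Fintype N]
    (u : N → A → ℝ) (C : N → ℝ) (δ : A → ℝ) : Prop :=
  IsDistribution δ (∑ i, C i) ∧
    ∀ δ' : A → ℝ, IsDistribution δ' (∑ i, C i) →
      nashProduct u C δ' ≤ nashProduct u C δ

open Filter Topology

/-!
In one step each agent `i` splits `C i` among the projects in proportion to what they contribute to
`i`'s utility, so a project is multiplied by the factor `growth`. Two applications of Jensen's
inequality for `log` drive the proof.

* One step from `d` raises the logarithm of the Nash product by at least
  `∑ x, d x * klFun (growth u C d x)`, where `klFun t = t * log t + 1 - t` is nonnegative and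
  vanishes only at `t = 1`. Hence `growth u C s x = 1` on the support of a maximizer `s`.
* For such `x` the numbers `C i * (u i x / util (u i) s)` are therefore convex weights, and Jensen
  with these weights shows that the relative entropy of `s` to `δ k` drops in each step by at least
  the gap between the log Nash products of `s` and `δ k`.

As relative entropy is nonnegative, the gaps tend to `0`, so every cluster point of the dynamics is
a maximizer. Relative to one of these cluster points the relative entropy decreases and tends to `0`
along a subsequence, hence along the whole sequence, and it controls the distance to that point.
-/

lemma tendsto_zero_of_le_sub_succ {f g : ℕ → ℝ} (hf : ∀ k, 0 ≤ f k) (hg : ∀ k, 0 ≤ g k)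
    (h : ∀ k, g k ≤ f k - f (k + 1)) : Tendsto g atTop (𝓝 0) := by
  have hanti : Antitone f := antitone_nat_of_succ_le fun k => by linarith [h k, hg k]
  have hlim := tendsto_atTop_ciInf hanti ⟨0, Set.forall_mem_range.2 hf⟩
  have hdiff : Tendsto (fun k => f k - f (k + 1)) atTop (𝓝 0) := by
    simpa using hlim.sub (hlim.comp (tendsto_add_atTop_nat 1))
  exact squeeze_zero hg h hdiff

lemma sum_mul_log_le_log_sum_mul {ι : Type*} {t : Finset ι} {w y : ι → ℝ}
    (hw : ∀ i ∈ t, 0 ≤ w i) (hw1 : ∑ i ∈ t, w i = 1) (hy : ∀ i ∈ t, w i ≠ 0 → 0 < y i) :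
    ∑ i ∈ t, w i * Real.log (y i) ≤ Real.log (∑ i ∈ t, w i * y i) := by
  classical
  have hrestrict : ∀ f : ι → ℝ, ∑ i ∈ t with w i ≠ 0, w i * f i = ∑ i ∈ t, w i * f i := fun f =>
    sum_filter_of_ne fun _ _ => left_ne_zero_of_mul
  rw [← sum_filter_ne_zero] at hw1
  rw [← hrestrict, ← hrestrict]
  exact strictConcaveOn_log_Ioi.concaveOn.le_map_sum
    (fun i hi => hw i (mem_of_mem_filter i hi)) hw1
    (fun i hi => hy i (mem_of_mem_filter i hi) (mem_filter.1 hi).2)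

section RelEntropy

variable {A : Type*} [Fintype A] {s d : A → ℝ}

/-- The relative entropy (Kullback–Leibler divergence) of `s` to `d`. It is real-valued, so where
`d x = 0 < s x` the summand is the junk value `0` instead of `∞`. -/
noncomputable def relEntropy (s d : A → ℝ) : ℝ :=
  ∑ x, s x * Real.log (s x / d x)

lemma sq_sqrt_sub_sqrt_add_sub_le_mul_log_div {a b : ℝ} (ha : 0 ≤ a) (hb : 0 ≤ b)
    (hab : 0 < a → 0 < b) : (√a - √b) ^ 2 + (a - b) ≤ a * Real.log (a / b) := by
  rcases ha.eq_or_lt with rfl | ha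
  · simp [Real.sq_sqrt hb]
  have hsa := Real.sqrt_pos.2 ha
  have hsb := Real.sqrt_pos.2 (hab ha)
  have hlog : Real.log (a / b) = 2 * Real.log (√a / √b) := by
    rw [← Real.sqrt_div ha.le, Real.log_sqrt (div_nonneg ha.le hb)]
    ring
  calc (√a - √b) ^ 2 + (a - b) = 2 * (√a ^ 2 * (1 - (√a / √b)⁻¹)) := by
        have hcancel : √a ^ 2 * (√a / √b)⁻¹ = √a * √b := by field_simp
        rw [mul_one_sub, hcancel]
        linarith [Real.sq_sqrt ha.le, Real.sq_sqrt hb, sub_sq √a √b]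
    _ ≤ 2 * (√a ^ 2 * Real.log (√a / √b)) := by
        gcongr
        exact Real.one_sub_inv_le_log_of_pos (div_pos hsa hsb)
    _ = a * Real.log (a / b) := by
        rw [hlog, Real.sq_sqrt ha.le]
        ring

lemma sum_sq_sqrt_sub_sqrt_le_relEntropy (hs : ∀ x, 0 ≤ s x) (hd : ∀ x, 0 ≤ d x)
    (hsum : ∑ x, d x ≤ ∑ x, s x) (hsd : ∀ x, 0 < s x → 0 < d x) :
    ∑ x, (√(s x) - √(d x)) ^ 2 ≤ relEntropy s d := by
  have hle : ∑ x, ((√(s x) - √(d x)) ^ 2 + (s x - d x)) ≤ relEntropy s d :=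
    sum_le_sum fun x _ => sq_sqrt_sub_sqrt_add_sub_le_mul_log_div (hs x) (hd x) (hsd x)
  rw [sum_add_distrib, sum_sub_distrib] at hle
  linarith

lemma relEntropy_nonneg (hs : ∀ x, 0 ≤ s x) (hd : ∀ x, 0 ≤ d x)
    (hsum : ∑ x, d x ≤ ∑ x, s x) (hsd : ∀ x, 0 < s x → 0 < d x) : 0 ≤ relEntropy s d :=
  (sum_nonneg fun _ _ => sq_nonneg _).trans (sum_sq_sqrt_sub_sqrt_le_relEntropy hs hd hsum hsd)

lemma relEntropy_mul {g : A → ℝ} (hd : ∀ x, s x ≠ 0 → d x ≠ 0) (hg : ∀ x, s x ≠ 0 → g x ≠ 0) :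
    relEntropy s (fun x => d x * g x) = relEntropy s d - ∑ x, s x * Real.log (g x) := by
  rw [relEntropy, relEntropy, ← sum_sub_distrib]
  refine sum_congr rfl fun x _ => ?_
  by_cases hx : s x = 0
  · simp [hx]
  · rw [← div_div, Real.log_div (div_ne_zero hx (hd x hx)) (hg x hx), mul_sub]

lemma tendsto_relEntropy_zero {ι : Type*} {l : Filter ι} {δ : ι → A → ℝ}
    (h : Tendsto δ l (𝓝 s)) : Tendsto (fun k => relEntropy s (δ k)) l (𝓝 0) := by
  rw [← sum_const_zero (s := univ (α := A))]
  refine tendsto_finsetSum _ fun x _ => ?_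
  by_cases hx : s x = 0
  · simpa [hx] using tendsto_const_nhds
  have hratio : Tendsto (fun k => s x / δ k x) l (𝓝 1) := by
    rw [← div_self hx]
    exact tendsto_const_nhds.div (tendsto_pi_nhds.1 h x) hx
  simpa using (hratio.log one_ne_zero).const_mul (s x)

lemma tendsto_of_tendsto_relEntropy_zero {ι : Type*} {l : Filter ι} {δ : ι → A → ℝ}
    (hs : ∀ x, 0 ≤ s x) (hδ : ∀ k x, 0 ≤ δ k x) (hsum : ∀ k, ∑ x, δ k x ≤ ∑ x, s x)
    (hsδ : ∀ k x, 0 < s x → 0 < δ k x) (h : Tendsto (fun k => relEntropy s (δ k)) l (𝓝 0)) :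
    Tendsto δ l (𝓝 s) := by
  refine tendsto_pi_nhds.2 fun x => ?_
  have hsq : Tendsto (fun k => (√(δ k x) - √(s x)) ^ 2) l (𝓝 0) := by
    refine squeeze_zero (fun _ => sq_nonneg _) (fun k => ?_) h
    rw [sub_sq_comm]
    exact (single_le_sum (fun y _ => sq_nonneg (√(s y) - √(δ k y))) (mem_univ x)).trans
      (sum_sq_sqrt_sub_sqrt_le_relEntropy hs (hδ k) (hsum k) (hsδ k))
  have hsqrt : Tendsto (fun k => √(δ k x)) l (𝓝 √(s x)) :=
    tendsto_sub_nhds_zero_iff.1 ((tendsto_zero_iff_abs_tendsto_zero _).2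
      (by simpa [Function.comp_def, Real.sqrt_sq_eq_abs] using hsq.sqrt))
  simpa [Real.sq_sqrt (hs x), Real.sq_sqrt (hδ _ x)] using hsqrt.pow 2

end RelEntropy

section Distributions

variable {A N : Type*} [Fintype A] [Fintype N] {u : N → A → ℝ} {C : N → ℝ} {v d : A → ℝ}

lemma isCompact_setOf_isDistribution (V : ℝ) : IsCompact {d : A → ℝ | IsDistribution d V} := by
  refine (isCompact_Icc (a := (0 : A → ℝ)) (b := fun _ => V)).of_isClosed_subset ?_ ?_
  · exact (isClosed_Ici (a := (0 : A → ℝ))).inter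
      (isClosed_eq (f := fun d : A → ℝ => ∑ x, d x) (by fun_prop) continuous_const)
  · rintro d ⟨hd, rfl⟩
    exact ⟨hd, fun x => single_le_sum (fun y _ => hd y) (mem_univ x)⟩

lemma continuous_nashProduct (hC : ∀ i, 0 ≤ C i) : Continuous (nashProduct u C) := by
  unfold nashProduct util
  exact continuous_finsetProd _ fun i _ => .rpow_const (by fun_prop) fun _ => .inr (hC i)

lemma IsDistribution.exists_isNashDistribution (u : N → A → ℝ) (hC : ∀ i, 0 ≤ C i)
    (hd : IsDistribution d (∑ i, C i)) : ∃ s, IsNashDistribution u C s :=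
  (isCompact_setOf_isDistribution _).exists_isMaxOn ⟨d, hd⟩ (continuous_nashProduct hC).continuousOn

lemma util_nonneg (hv : ∀ x, 0 ≤ v x) (hd : ∀ x, 0 ≤ d x) : 0 ≤ util v d :=
  sum_nonneg fun x _ => mul_nonneg (hd x) (hv x)

lemma util_pos (hv : ∀ x, 0 ≤ v x) (hd : ∀ x, 0 ≤ d x) (h : ∃ x, 0 < v x ∧ 0 < d x) :
    0 < util v d :=
  let ⟨x, hvx, hdx⟩ := h
  sum_pos' (fun y _ => mul_nonneg (hd y) (hv y)) ⟨x, mem_univ x, mul_pos hdx hvx⟩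

/-- The logarithm of the Nash product. This holds only where every utility is positive: for zero
utility `Real.log` takes the junk value `0`. -/
noncomputable def logNash (u : N → A → ℝ) (C : N → ℝ) (d : A → ℝ) : ℝ :=
  ∑ i, C i * Real.log (util (u i) d)

lemma nashProduct_eq_exp_logNash (hd : ∀ i, 0 < util (u i) d) :
    nashProduct u C d = Real.exp (logNash u C d) := by
  rw [logNash, Real.exp_sum]
  exact prod_congr rfl fun i _ => by rw [Real.rpow_def_of_pos (hd i), mul_comm]

lemma logNash_sub_logNash {s : A → ℝ} (hs : ∀ i, 0 < util (u i) s) (hd : ∀ i, 0 < util (u i) d) :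
    logNash u C s - logNash u C d = ∑ i, C i * Real.log (util (u i) s / util (u i) d) := by
  rw [logNash, logNash, ← sum_sub_distrib]
  exact sum_congr rfl fun i _ => by rw [Real.log_div (hs i).ne' (hd i).ne', mul_sub]

namespace IsNashDistribution

variable {s : A → ℝ}

lemma logNash_le (hs : IsNashDistribution u C s) (hus : ∀ i, 0 < util (u i) s)
    (hd : IsDistribution d (∑ i, C i)) (hud : ∀ i, 0 < util (u i) d) :
    logNash u C d ≤ logNash u C s := by
  rw [← Real.exp_le_exp, ← nashProduct_eq_exp_logNash hud, ← nashProduct_eq_exp_logNash hus]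
  exact hs.2 d hd

lemma util_pos (hu : ∀ i x, 0 ≤ u i x) (hC : ∀ i, 0 < C i) (hs : IsNashDistribution u C s)
    (hd : IsDistribution d (∑ i, C i)) (hud : ∀ i, 0 < util (u i) d) (i : N) :
    0 < util (u i) s := by
  have hprod : 0 < nashProduct u C s :=
    (nashProduct_eq_exp_logNash hud ▸ Real.exp_pos _).trans_le (hs.2 d hd)
  refine (util_nonneg (hu i) hs.1.1).lt_of_ne' fun hzero => hprod.ne' ?_
  exact prod_eq_zero (mem_univ i) (by rw [hzero, Real.zero_rpow (hC i).ne'])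

end IsNashDistribution

end Distributions

section Step

variable {A N : Type*} [Fintype A] [Fintype N] {u : N → A → ℝ} {C : N → ℝ} {v d : A → ℝ}

/-- The fraction of the utility of `d`, for an agent with utility function `v`, that comes from
project `x`. -/
noncomputable def utilShare (v d : A → ℝ) (x : A) : ℝ :=
  d x * v x / util v d

lemma utilShare_nonneg (hv : ∀ x, 0 ≤ v x) (hd : ∀ x, 0 ≤ d x) (x : A) : 0 ≤ utilShare v d x :=
  div_nonneg (mul_nonneg (hd x) (hv x)) (util_nonneg hv hd)

lemma sum_utilShare (hd : util v d ≠ 0) : ∑ x, utilShare v d x = 1 := by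
  simp only [utilShare]
  rw [← sum_div]
  exact div_self hd

lemma sum_utilShare_mul (g : A → ℝ) :
    ∑ x, utilShare v d x * g x = util v (fun x => d x * g x) / util v d := by
  simp only [utilShare, util, sum_div]
  exact sum_congr rfl fun x _ => by ring

/-- The factor by which one step of the dynamics, started at `d`, multiplies the amount spent on
project `x`. -/
noncomputable def growth (u : N → A → ℝ) (C : N → ℝ) (d : A → ℝ) (x : A) : ℝ :=
  ∑ i, C i * (u i x / util (u i) d)

/-- One step of the Nash dynamics, in multiplicative form: the factor `d x` is taken out of the sum
over the agents. -/
noncomputable def nashStep (u : N → A → ℝ) (C : N → ℝ) (d : A → ℝ) (x : A) : ℝ :=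
  d x * growth u C d x

lemma sum_mul_sum_mul_div_util (f : N → A → ℝ) :
    ∑ x, d x * ∑ i, C i * (u i x / util (u i) d) * f i x =
      ∑ i, C i * ∑ x, utilShare (u i) d x * f i x := by
  simp only [mul_sum, utilShare]
  rw [sum_comm]
  exact sum_congr rfl fun i _ => sum_congr rfl fun x _ => by ring

lemma sum_nashStep_mul (g : A → ℝ) :
    ∑ x, nashStep u C d x * g x = ∑ i, C i * ∑ x, utilShare (u i) d x * g x := by
  simp only [nashStep, growth, mul_assoc, sum_mul, ← sum_mul_sum_mul_div_util]

lemma sum_nashStep (hd : ∀ i, util (u i) d ≠ 0) : ∑ x, nashStep u C d x = ∑ i, C i := by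
  simpa [sum_utilShare (hd _)] using sum_nashStep_mul (u := u) (C := C) (d := d) fun _ => 1

lemma growth_nonneg (hu : ∀ i x, 0 ≤ u i x) (hC : ∀ i, 0 ≤ C i) (hd : ∀ x, 0 ≤ d x) (x : A) :
    0 ≤ growth u C d x :=
  sum_nonneg fun i _ => mul_nonneg (hC i) (div_nonneg (hu i x) (util_nonneg (hu i) hd))

lemma growth_pos (hu : ∀ i x, 0 ≤ u i x) (hC : ∀ i, 0 < C i) (hd : ∀ x, 0 ≤ d x)
    (hud : ∀ i, 0 < util (u i) d) {x : A} (hx : ∃ i, 0 < u i x) : 0 < growth u C d x :=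
  let ⟨i, hi⟩ := hx
  sum_pos' (fun j _ => mul_nonneg (hC j).le (div_nonneg (hu j x) (util_nonneg (hu j) hd)))
    ⟨i, mem_univ i, mul_pos (hC i) (div_pos hi (hud i))⟩

lemma isDistribution_nashStep (hu : ∀ i x, 0 ≤ u i x) (hC : ∀ i, 0 ≤ C i) (hd : ∀ x, 0 ≤ d x)
    (hud : ∀ i, 0 < util (u i) d) : IsDistribution (nashStep u C d) (∑ i, C i) :=
  ⟨fun x => mul_nonneg (hd x) (growth_nonneg hu hC hd x), sum_nashStep fun i => (hud i).ne'⟩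

lemma util_nashStep_pos (hu : ∀ i x, 0 ≤ u i x) (hC : ∀ i, 0 < C i) (hd : ∀ x, 0 ≤ d x)
    (hud : ∀ i, 0 < util (u i) d) (i : N) : 0 < util (u i) (nashStep u C d) := by
  obtain ⟨x, -, hx⟩ : ∃ x ∈ univ, 0 < d x * u i x :=
    exists_lt_of_sum_lt (by simpa [util] using hud i)
  have hux : 0 < u i x := pos_of_mul_pos_right hx (hd x)
  exact util_pos (hu i) (isDistribution_nashStep hu (fun i => (hC i).le) hd hud).1
    ⟨x, hux, mul_pos (pos_of_mul_pos_left hx hux.le) (growth_pos hu hC hd hud ⟨i, hux⟩)⟩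

lemma sum_nashStep_mul_log_growth_le (hu : ∀ i x, 0 ≤ u i x) (hC : ∀ i, 0 < C i)
    (hd : ∀ x, 0 ≤ d x) (hud : ∀ i, 0 < util (u i) d) :
    ∑ x, nashStep u C d x * Real.log (growth u C d x) ≤
      logNash u C (nashStep u C d) - logNash u C d := by
  rw [sum_nashStep_mul, logNash_sub_logNash (util_nashStep_pos hu hC hd hud) hud]
  refine sum_le_sum fun i _ => mul_le_mul_of_nonneg_left ?_ (hC i).le
  have hgrowth : ∀ x, utilShare (u i) d x ≠ 0 → 0 < growth u C d x := fun x hx =>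
    growth_pos hu hC hd hud ⟨i, (hu i x).lt_of_ne' fun hzero => hx (by simp [utilShare, hzero])⟩
  exact (sum_mul_log_le_log_sum_mul (fun x _ => utilShare_nonneg (hu i) hd x)
    (sum_utilShare (hud i).ne') fun x _ => hgrowth x).trans_eq (by rw [sum_utilShare_mul]; rfl)

lemma sum_mul_klFun_growth (hd : IsDistribution d (∑ i, C i)) (hud : ∀ i, util (u i) d ≠ 0) :
    ∑ x, d x * InformationTheory.klFun (growth u C d x) =
      ∑ x, nashStep u C d x * Real.log (growth u C d x) := by
  have hterm : ∀ x, d x * InformationTheory.klFun (growth u C d x) =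
      nashStep u C d x * Real.log (growth u C d x) + (d x - nashStep u C d x) := fun x => by
    rw [InformationTheory.klFun_apply, nashStep]
    ring
  simp only [hterm]
  rw [sum_add_distrib, sum_sub_distrib, hd.2, sum_nashStep hud, sub_self, add_zero]

namespace IsNashDistribution

variable {s : A → ℝ}

lemma growth_eq_one (hu : ∀ i x, 0 ≤ u i x) (hC : ∀ i, 0 < C i) (hs : IsNashDistribution u C s)
    (hus : ∀ i, 0 < util (u i) s) {x : A} (hx : 0 < s x) : growth u C s x = 1 := by
  have hgrowth := growth_nonneg hu (fun i => (hC i).le) hs.1.1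
  have hterm : ∀ y, 0 ≤ s y * InformationTheory.klFun (growth u C s y) := fun y =>
    mul_nonneg (hs.1.1 y) (InformationTheory.klFun_nonneg (hgrowth y))
  have hsum : ∑ y, s y * InformationTheory.klFun (growth u C s y) ≤ 0 :=
    calc _ = ∑ y, nashStep u C s y * Real.log (growth u C s y) :=
          sum_mul_klFun_growth hs.1 fun i => (hus i).ne'
      _ ≤ logNash u C (nashStep u C s) - logNash u C s :=
          sum_nashStep_mul_log_growth_le hu hC hs.1.1 hus
      _ ≤ 0 := sub_nonpos.2 (hs.logNash_le hus
          (isDistribution_nashStep hu (fun i => (hC i).le) hs.1.1 hus)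
          (util_nashStep_pos hu hC hs.1.1 hus))
  have hzero := (sum_eq_zero_iff_of_nonneg fun y _ => hterm y).1
    (hsum.antisymm (sum_nonneg fun y _ => hterm y)) x (mem_univ x)
  exact (InformationTheory.klFun_eq_zero_iff (hgrowth x)).1
    ((mul_eq_zero_iff_left hx.ne').1 hzero)

lemma exists_acceptable (hu : ∀ i x, 0 ≤ u i x) (hC : ∀ i, 0 < C i)
    (hs : IsNashDistribution u C s) (hus : ∀ i, 0 < util (u i) s) {x : A} (hx : 0 < s x) :
    ∃ i, 0 < u i x := by
  by_contra! hno
  have hone := hs.growth_eq_one hu hC hus hx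
  simp [growth, fun i => (hno i).antisymm (hu i x)] at hone

lemma logNash_sub_le_sum_mul_log_growth (hu : ∀ i x, 0 ≤ u i x) (hC : ∀ i, 0 < C i)
    (hs : IsNashDistribution u C s) (hus : ∀ i, 0 < util (u i) s) (hud : ∀ i, 0 < util (u i) d) :
    logNash u C s - logNash u C d ≤ ∑ x, s x * Real.log (growth u C d x) := by
  have hgap : logNash u C s - logNash u C d = ∑ x, s x * ∑ i, C i * (u i x / util (u i) s) *
      Real.log (util (u i) s / util (u i) d) := by
    simp only [logNash_sub_logNash hus hud, sum_mul_sum_mul_div_util, ← sum_mul,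
      sum_utilShare (hus _).ne', one_mul]
  rw [hgap]
  refine sum_le_sum fun x _ => ?_
  rcases (hs.1.1 x).eq_or_lt with hx | hx
  · simp [← hx]
  refine mul_le_mul_of_nonneg_left ?_ hx.le
  refine (sum_mul_log_le_log_sum_mul
    (fun i _ => mul_nonneg (hC i).le (div_nonneg (hu i x) (hus i).le))
    (hs.growth_eq_one hu hC hus hx) fun i _ _ => div_pos (hus i) (hud i)).trans_eq ?_
  congr 1
  exact sum_congr rfl fun i _ => by rw [mul_assoc, div_mul_div_cancel₀ (hus i).ne']

end IsNashDistribution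

end Step

section Dynamics

variable {A N : Type*} [Fintype A] [Fintype N] {u : N → A → ℝ} {C : N → ℝ} {s d : A → ℝ}

/-- The invariant of the dynamics: a distribution of the pool that funds every project acceptable
to some agent. Projects acceptable to nobody lose their funding in the first step. -/
structure FundsAcceptable (u : N → A → ℝ) (C : N → ℝ) (d : A → ℝ) : Prop where
  isDistribution : IsDistribution d (∑ i, C i)
  pos : ∀ i x, 0 < u i x → 0 < d x

namespace FundsAcceptable

lemma util_pos (hu : ∀ i x, 0 ≤ u i x) (hacc : ∀ i, ∃ x, 0 < u i x) (hd : FundsAcceptable u C d)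
    (i : N) : 0 < util (u i) d :=
  _root_.util_pos (hu i) hd.isDistribution.1 ((hacc i).imp fun x hx => ⟨hx, hd.pos i x hx⟩)

lemma nashStep (hu : ∀ i x, 0 ≤ u i x) (hC : ∀ i, 0 < C i) (hacc : ∀ i, ∃ x, 0 < u i x)
    (hd : FundsAcceptable u C d) : FundsAcceptable u C (nashStep u C d) where
  isDistribution := isDistribution_nashStep hu (fun i => (hC i).le) hd.isDistribution.1
    (hd.util_pos hu hacc)
  pos i x hx := mul_pos (hd.pos i x hx)
    (growth_pos hu hC hd.isDistribution.1 (hd.util_pos hu hacc) ⟨i, hx⟩)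

end FundsAcceptable

namespace IsNashDistribution

lemma pos_of_fundsAcceptable (hu : ∀ i x, 0 ≤ u i x) (hC : ∀ i, 0 < C i)
    (hacc : ∀ i, ∃ x, 0 < u i x) (hs : IsNashDistribution u C s) (hd : FundsAcceptable u C d)
    {x : A} (hx : 0 < s x) : 0 < d x :=
  have hus := hs.util_pos hu hC hd.isDistribution (hd.util_pos hu hacc)
  let ⟨i, hi⟩ := hs.exists_acceptable hu hC hus hx
  hd.pos i x hi

lemma logNash_sub_le_relEntropy_sub (hu : ∀ i x, 0 ≤ u i x) (hC : ∀ i, 0 < C i)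
    (hacc : ∀ i, ∃ x, 0 < u i x) (hs : IsNashDistribution u C s) (hd : FundsAcceptable u C d) :
    logNash u C s - logNash u C d ≤ relEntropy s d - relEntropy s (nashStep u C d) := by
  have hud := hd.util_pos hu hacc
  have hus := hs.util_pos hu hC hd.isDistribution hud
  have hpos : ∀ x, s x ≠ 0 → 0 < s x := fun x hx => (hs.1.1 x).lt_of_ne' hx
  have hdrop : relEntropy s (nashStep u C d) =
      relEntropy s d - ∑ x, s x * Real.log (growth u C d x) :=
    relEntropy_mul (fun x hx => (hs.pos_of_fundsAcceptable hu hC hacc hd (hpos x hx)).ne')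
      fun x hx => (growth_pos hu hC hd.isDistribution.1 hud
        (hs.exists_acceptable hu hC hus (hpos x hx))).ne'
  rw [hdrop, sub_sub_cancel]
  exact hs.logNash_sub_le_sum_mul_log_growth hu hC hus hud

lemma relEntropy_nonneg (hu : ∀ i x, 0 ≤ u i x) (hC : ∀ i, 0 < C i)
    (hacc : ∀ i, ∃ x, 0 < u i x) (hs : IsNashDistribution u C s) (hd : FundsAcceptable u C d) :
    0 ≤ relEntropy s d :=
  _root_.relEntropy_nonneg hs.1.1 hd.isDistribution.1 (hd.isDistribution.2.trans hs.1.2.symm).le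
    fun _ => hs.pos_of_fundsAcceptable hu hC hacc hd

variable {δ : ℕ → A → ℝ}

lemma antitone_relEntropy (hu : ∀ i x, 0 ≤ u i x) (hC : ∀ i, 0 < C i)
    (hacc : ∀ i, ∃ x, 0 < u i x) (hs : IsNashDistribution u C s)
    (hδ : ∀ k, FundsAcceptable u C (δ k)) (hstep : ∀ k, δ (k + 1) = nashStep u C (δ k)) :
    Antitone fun k => relEntropy s (δ k) := by
  refine antitone_nat_of_succ_le fun k => ?_
  have hud := (hδ k).util_pos hu hacc
  have hdist := (hδ k).isDistribution
  rw [hstep]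
  linarith [hs.logNash_sub_le_relEntropy_sub hu hC hacc (hδ k),
    hs.logNash_le (hs.util_pos hu hC hdist hud) hdist hud]

lemma tendsto_nashProduct (hu : ∀ i x, 0 ≤ u i x) (hC : ∀ i, 0 < C i)
    (hacc : ∀ i, ∃ x, 0 < u i x) (hs : IsNashDistribution u C s)
    (hδ : ∀ k, FundsAcceptable u C (δ k)) (hstep : ∀ k, δ (k + 1) = nashStep u C (δ k)) :
    Tendsto (fun k => nashProduct u C (δ k)) atTop (𝓝 (nashProduct u C s)) := by
  have hud : ∀ k i, 0 < util (u i) (δ k) := fun k => (hδ k).util_pos hu hacc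
  have hus := hs.util_pos hu hC (hδ 0).isDistribution (hud 0)
  have hgap : Tendsto (fun k => logNash u C s - logNash u C (δ k)) atTop (𝓝 0) :=
    tendsto_zero_of_le_sub_succ (fun k => hs.relEntropy_nonneg hu hC hacc (hδ k))
      (fun k => sub_nonneg.2 (hs.logNash_le hus (hδ k).isDistribution (hud k)))
      fun k => hstep k ▸ hs.logNash_sub_le_relEntropy_sub hu hC hacc (hδ k)
  have hlog : Tendsto (fun k => logNash u C (δ k)) atTop (𝓝 (logNash u C s)) := by
    simpa using hgap.const_sub (logNash u C s)
  simpa only [nashProduct_eq_exp_logNash hus, nashProduct_eq_exp_logNash (hud _)] using hlog.rexp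

lemma tendsto_of_tendsto_subseq (hu : ∀ i x, 0 ≤ u i x) (hC : ∀ i, 0 < C i)
    (hacc : ∀ i, ∃ x, 0 < u i x) (hs : IsNashDistribution u C s)
    (hδ : ∀ k, FundsAcceptable u C (δ k)) (hstep : ∀ k, δ (k + 1) = nashStep u C (δ k))
    {φ : ℕ → ℕ} (hφ : Tendsto φ atTop atTop) (hlim : Tendsto (δ ∘ φ) atTop (𝓝 s)) :
    Tendsto δ atTop (𝓝 s) := by
  have hentropy : Tendsto (fun k => relEntropy s (δ k)) atTop (𝓝 0) :=
    (tendsto_iff_tendsto_subseq_of_antitone (hs.antitone_relEntropy hu hC hacc hδ hstep) hφ).2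
      (tendsto_relEntropy_zero hlim)
  exact tendsto_of_tendsto_relEntropy_zero hs.1.1 (fun k => (hδ k).isDistribution.1)
    (fun k => ((hδ k).isDistribution.2.trans hs.1.2.symm).le)
    (fun k _ => hs.pos_of_fundsAcceptable hu hC hacc (hδ k)) hentropy

end IsNashDistribution

end Dynamics

theorem nash_dynamics_converges_of_unique_general {A N : Type*} [Fintype A] [Fintype N]
    (u : N → A → ℝ) (hu : ∀ i x, 0 ≤ u i x) (C : N → ℝ) (hC : ∀ i, 0 < C i)
    (hacc : ∀ i, ∃ x, 0 < u i x) (δ : ℕ → A → ℝ)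
    (h0 : IsDistribution (δ 0) (∑ i, C i)) (h0pos : ∀ i x, 0 < u i x → 0 < δ 0 x)
    (hrec : ∀ k x, δ (k + 1) x = ∑ i, C i * (u i x / util (u i) (δ k)) * δ k x) :
    ∃ s, IsNashDistribution u C s ∧ Tendsto δ atTop (𝓝 s) := by
  have hstep : ∀ k, δ (k + 1) = nashStep u C (δ k) := fun k => funext fun x => by
    rw [hrec, ← sum_mul, mul_comm, nashStep, growth]
  have hδ : ∀ k, FundsAcceptable u C (δ k) :=
    Nat.rec ⟨h0, h0pos⟩ fun k hk => hstep k ▸ hk.nashStep hu hC hacc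
  obtain ⟨m, hm⟩ := h0.exists_isNashDistribution u fun i => (hC i).le
  obtain ⟨s, hs, φ, hφ, hlim⟩ :=
    (isCompact_setOf_isDistribution _).tendsto_subseq fun k => (hδ k).isDistribution
  have hvalue : nashProduct u C s = nashProduct u C m :=
    tendsto_nhds_unique (((continuous_nashProduct fun i => (hC i).le).tendsto s).comp hlim)
      ((hm.tendsto_nashProduct hu hC hacc hδ hstep).comp hφ.tendsto_atTop)
  have hsmax : IsNashDistribution u C s := ⟨hs, fun d hd => (hm.2 d hd).trans_eq hvalue.symm⟩
  exact ⟨s, hsmax, hsmax.tendsto_of_tendsto_subseq hu hC hacc hδ hstep hφ.tendsto_atTop hlim⟩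

theorem nash_dynamics_converges_of_unique {A N : Type*}
    [Fintype A] [Nonempty A] [Fintype N]
    (u : N → A → ℝ) (hu : ∀ i x, 0 ≤ u i x)
    (C : N → ℝ) (hC : ∀ i, 0 < C i)
    (hacc : ∀ i, ∃ x, 0 < u i x)
    (δstar : A → ℝ) (hstar : IsNashDistribution u C δstar)
    (huniq : ∀ d : A → ℝ, IsNashDistribution u C d → d = δstar)
    (δ : ℕ → A → ℝ)
    (h0 : IsDistribution (δ 0) (∑ i, C i)) (h0pos : ∀ x, 0 < δ 0 x)
    (hrec : ∀ k x, δ (k + 1) x = ∑ i, C i * (u i x / util (u i) (δ k)) * δ k x) :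
    ∀ x, Tendsto (fun k => δ k x) atTop (𝓝 (δstar x)) := by
  obtain ⟨s, hs, hlim⟩ := nash_dynamics_converges_of_unique_general u hu C hC hacc δ h0
    (fun _ x _ => h0pos x) hrec
  exact tendsto_pi_nhds.1 (huniq s hs ▸ hlim)
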